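/- arXiv:2005.11110 — 2 statements merged into one kernel-verified Lean document; each statement's English description precedes it below -/
import Mathlib

section
/- Under the deep-GP marginalisation setup, each matrix Σ̂^l (l = 1, …, L) is symmetric positive definite, and for all f^1 ∈ ℝ^{T_1}, …, f^L ∈ ℝ^{T_L} one has the identity ∫_{ℝ^m} N(f_M; μ_M, S_M) · ∏_{l=1}^{L} N(f^l; A^l(f^{l−1}) f_M^l, B^l(f^{l−1})) df_M = ∏_{l=1}^{L} N(f^l; μ̂^l, Σ̂^l); that is, the inducing outputs f_M can be marginalised analytically and the resulting joint density of the layer outputs factorises into the stated chain of Gaussian conditionals (Theorem 1 of the paper). -/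
open Matrix MeasureTheory Real

noncomputable section

/-- The multivariate Gaussian density
`N(x; μ, S) = (2π)^{−d/2} (det S)^{−1/2} exp(−(1/2)(x−μ)ᵀ S⁻¹ (x−μ))`. -/
def gaussPDF {ι : Type*} [Fintype ι] [DecidableEq ι]
    (μ : ι → ℝ) (S : Matrix ι ι ℝ) (x : ι → ℝ) : ℝ :=
  (2 * Real.pi) ^ (-(Fintype.card ι : ℝ) / 2) * S.det ^ (-(1 : ℝ) / 2) *
    Real.exp (-(1 / 2 : ℝ) * ((x - μ) ⬝ᵥ (S⁻¹ *ᵥ (x - μ))))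

variable {L : ℕ}

/-- Indices lying in layers strictly before layer `l`. -/
abbrev Below (d : Fin L → ℕ) (l : Fin L) : Type :=
  {p : (i : Fin L) × Fin (d i) // p.1 < l}

/-- The block submatrix `S^{1:l−1,1:l−1}`. -/
def prevBlock {d : Fin L → ℕ}
    (S : Matrix ((i : Fin L) × Fin (d i)) ((i : Fin L) × Fin (d i)) ℝ) (l : Fin L) :
    Matrix (Below d l) (Below d l) ℝ :=
  Matrix.of fun p q => S p.val q.val

/-- The block row `S^{l,1:l−1}`. -/
def rowBlock {d : Fin L → ℕ}
    (S : Matrix ((i : Fin L) × Fin (d i)) ((i : Fin L) × Fin (d i)) ℝ) (l : Fin L) :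
    Matrix (Fin (d l)) (Below d l) ℝ :=
  Matrix.of fun i q => S ⟨l, i⟩ q.val

/-- The block column `S^{1:l−1,l}`. -/
def colBlock {d : Fin L → ℕ}
    (S : Matrix ((i : Fin L) × Fin (d i)) ((i : Fin L) × Fin (d i)) ℝ) (l : Fin L) :
    Matrix (Below d l) (Fin (d l)) ℝ :=
  Matrix.of fun p j => S p.val ⟨l, j⟩

/-- The diagonal block `S^{ll}`. -/
def diagBlock {d : Fin L → ℕ}
    (S : Matrix ((i : Fin L) × Fin (d i)) ((i : Fin L) × Fin (d i)) ℝ) (l : Fin L) :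
    Matrix (Fin (d l)) (Fin (d l)) ℝ :=
  Matrix.of fun i j => S ⟨l, i⟩ ⟨l, j⟩

/-- The subvector `x^{1:l−1}`. -/
def belowVec {d : Fin L → ℕ} (x : ((i : Fin L) × Fin (d i)) → ℝ) (l : Fin L) :
    Below d l → ℝ := fun p => x p.val

/-- The subvector `x^l`. -/
def blockVec {d : Fin L → ℕ} (x : ((i : Fin L) × Fin (d i)) → ℝ) (l : Fin L) :
    Fin (d l) → ℝ := fun i => x ⟨l, i⟩

/-- `μ̂^l = μ̃^l + S̃^{l,1:l−1}(S̃^{1:l−1,1:l−1})⁻¹(f^{1:l−1} − μ̃^{1:l−1})`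
(for `l = 1` the correction term is a sum over the empty index set). -/
def muHat {d : Fin L → ℕ} (μ : ((i : Fin L) × Fin (d i)) → ℝ)
    (S : Matrix ((i : Fin L) × Fin (d i)) ((i : Fin L) × Fin (d i)) ℝ)
    (f : ((i : Fin L) × Fin (d i)) → ℝ) (l : Fin L) : Fin (d l) → ℝ :=
  blockVec μ l + rowBlock S l *ᵥ ((prevBlock S l)⁻¹ *ᵥ (belowVec f l - belowVec μ l))

/-- `Σ̂^l = S̃^{ll} − S̃^{l,1:l−1}(S̃^{1:l−1,1:l−1})⁻¹S̃^{1:l−1,l}` (for `l = 1`,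
`Σ̂^1 = S̃^{11}`). -/
def sigmaHat {d : Fin L → ℕ}
    (S : Matrix ((i : Fin L) × Fin (d i)) ((i : Fin L) × Fin (d i)) ℝ) (l : Fin L) :
    Matrix (Fin (d l)) (Fin (d l)) ℝ :=
  diagBlock S l - rowBlock S l * (prevBlock S l)⁻¹ * colBlock S l

/-- The block `S_M^{ll'}` of the inducing-output covariance pairing layers `l` and `l'`. -/
def SMblock {m : Fin L → ℕ}
    (SM : Matrix ((i : Fin L) × Fin (m i)) ((i : Fin L) × Fin (m i)) ℝ) (l l' : Fin L) :
    Matrix (Fin (m l)) (Fin (m l')) ℝ :=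
  Matrix.of fun a b => SM ⟨l, a⟩ ⟨l', b⟩

/-- `μ̃^l := A^l(f^{l−1}) μ_M^l`, collected into one layered vector. -/
def muTilde (T : Fin (L + 1) → ℕ) (m : Fin L → ℕ)
    (A : ∀ l : Fin L, (Fin (T l.castSucc) → ℝ) → Matrix (Fin (T l.succ)) (Fin (m l)) ℝ)
    (μM : ((i : Fin L) × Fin (m i)) → ℝ) (f : ∀ l : Fin (L + 1), Fin (T l) → ℝ) :
    ((l : Fin L) × Fin (T l.succ)) → ℝ :=
  fun p => (A p.1 (f p.1.castSucc) *ᵥ fun a => μM ⟨p.1, a⟩) p.2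

/-- `S̃^{ll'} := δ_{ll'} B^l(f^{l−1}) + A^l(f^{l−1}) S_M^{ll'} A^{l'}(f^{l'−1})ᵀ`,
collected into one layered matrix. -/
def Stilde (T : Fin (L + 1) → ℕ) (m : Fin L → ℕ)
    (A : ∀ l : Fin L, (Fin (T l.castSucc) → ℝ) → Matrix (Fin (T l.succ)) (Fin (m l)) ℝ)
    (B : ∀ l : Fin L, (Fin (T l.castSucc) → ℝ) → Matrix (Fin (T l.succ)) (Fin (T l.succ)) ℝ)
    (SM : Matrix ((i : Fin L) × Fin (m i)) ((i : Fin L) × Fin (m i)) ℝ)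
    (f : ∀ l : Fin (L + 1), Fin (T l) → ℝ) :
    Matrix ((l : Fin L) × Fin (T l.succ)) ((l : Fin L) × Fin (T l.succ)) ℝ :=
  Matrix.of fun p q =>
    (if h : p.1 = q.1 then
        B p.1 (f p.1.castSucc) p.2 (Fin.cast (show T q.1.succ = T p.1.succ by rw [h]) q.2)
      else 0) +
      (A p.1 (f p.1.castSucc) * SMblock SM p.1 q.1 * (A q.1 (f q.1.castSucc))ᵀ) p.2 q.2

/-!
A Gaussian density is equivariant under invertible linear maps. The unipotent shear
`(x, u) ↦ (x, u + G x)` turns a product of two independent Gaussians into the joint density of a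
linear-Gaussian pair, and the Schur complement shows that every Gaussian on a direct sum arises in
this way. Reading the resulting identity in one direction gives conditioning, and integrating out
one factor gives marginalisation.

For fixed `f`, the layers are assembled block-diagonally into a single linear-Gaussian model, so
marginalising `f_M` leaves the Gaussian with mean `μ̃` and covariance `S̃`. The marginal density of
the first `l` layers then telescopes, its successive ratios being the Gaussian conditionals
`N(f^l; μ̂^l, Σ̂^l)`.
-/

section PosDef

open scoped ComplexOrder

variable {ι κ 𝕜 : Type*} [RCLike 𝕜] [Fintype ι]

theorem posDef_fromBlocks_iff_schurComplement [DecidableEq ι] [Finite κ]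
    {A : Matrix ι ι 𝕜} (hA : A.PosDef) (B : Matrix ι κ 𝕜) (D : Matrix κ κ 𝕜) :
    (fromBlocks A B Bᴴ D).PosDef ↔ (D - Bᴴ * A⁻¹ * B).PosDef := by
  classical
  have := Fintype.ofFinite κ
  have := hA.isUnit.invertible
  have hdet : (fromBlocks A B Bᴴ D).det = A.det * (D - Bᴴ * A⁻¹ * B).det := by
    rw [det_fromBlocks₁₁, invOf_eq_nonsing_inv]
  have hpsd := PosDef.fromBlocks₁₁ B D hA
  refine ⟨fun h ↦ ?_, fun h ↦ ?_⟩
  · exact (hpsd.1 h.posSemidef).posDef_iff_det_ne_zero.2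
      (right_ne_zero_of_mul (hdet ▸ h.det_pos.ne'))
  · exact (hpsd.2 h.posSemidef).posDef_iff_det_ne_zero.2
      (hdet ▸ mul_ne_zero hA.det_pos.ne' h.det_pos.ne')

theorem posDef_schurComplement [DecidableEq ι] [Finite κ] {A : Matrix ι ι 𝕜}
    {B : Matrix ι κ 𝕜} {C : Matrix κ ι 𝕜} {D : Matrix κ κ 𝕜}
    (h : (fromBlocks A B C D).PosDef) : (D - C * A⁻¹ * B).PosDef := by
  obtain ⟨-, rfl, -⟩ := isHermitian_fromBlocks_iff.1 h.isHermitian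
  exact (posDef_fromBlocks_iff_schurComplement (h.submatrix Sum.inl_injective) B D).1 h

theorem posDef_fromBlocks_add_mul_mul_conjTranspose [Finite κ] {A : Matrix ι ι 𝕜}
    {D : Matrix κ κ 𝕜} (hA : A.PosDef) (hD : D.PosDef) (G : Matrix κ ι 𝕜) :
    (fromBlocks A (A * Gᴴ) (G * A) (D + G * A * Gᴴ)).PosDef := by
  classical
  have := hA.isUnit.invertible
  have hAG : (A * Gᴴ)ᴴ = G * A := by simp [hA.isHermitian.eq]
  rw [← hAG, posDef_fromBlocks_iff_schurComplement hA, hAG]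
  simpa [Matrix.mul_assoc] using hD

open scoped MatrixOrder in
theorem exists_mul_conjTranspose_eq_of_posDef [DecidableEq ι] {S : Matrix ι ι 𝕜} (hS : S.PosDef) :
    ∃ M : Matrix ι ι 𝕜, IsUnit M.det ∧ M * Mᴴ = S := by
  obtain ⟨M, hM⟩ := CStarAlgebra.nonneg_iff_eq_mul_star_self.1 hS.posSemidef.nonneg
  refine ⟨M, isUnit_of_mul_isUnit_left (y := (Mᴴ).det) ?_, hM.symm⟩
  rw [← det_mul, ← star_eq_conjTranspose, ← hM]
  exact hS.det_pos.ne'.isUnit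

end PosDef

section BlockDiagonal

variable {o : Type*} {κ ι : o → Type*} [Fintype o] [DecidableEq o] [∀ l, Fintype (ι l)]

theorem blockDiagonal'_mulVec_apply {R : Type*} [NonUnitalNonAssocSemiring R]
    (M : ∀ l, Matrix (κ l) (ι l) R) (x : (Σ l, ι l) → R) (l : o) (i : κ l) :
    (blockDiagonal' M *ᵥ x) ⟨l, i⟩ = (M l *ᵥ fun j ↦ x ⟨l, j⟩) i := by
  simp only [mulVec, dotProduct, Fintype.sum_sigma]
  refine (Fintype.sum_eq_single l fun k hk ↦ ?_).trans (by simp)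
  simp [blockDiagonal'_apply_ne _ _ _ hk.symm]

theorem submatrix_blockDiagonal'_mul {R α : Type*} [NonUnitalNonAssocSemiring R]
    (M : ∀ l, Matrix (κ l) (ι l) R) (N : Matrix (Σ l, ι l) α R) (l : o) :
    (blockDiagonal' M * N).submatrix (Sigma.mk l) id = M l * N.submatrix (Sigma.mk l) id := by
  ext i a
  exact blockDiagonal'_mulVec_apply M (N.col a) l i

theorem submatrix_blockDiagonal'_mul_mul_transpose {R : Type*} [CommSemiring R]
    (M : ∀ l, Matrix (κ l) (ι l) R) (S : Matrix (Σ l, ι l) (Σ l, ι l) R) (k l : o) :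
    (blockDiagonal' M * S * (blockDiagonal' M)ᵀ).submatrix (Sigma.mk k) (Sigma.mk l) =
      M k * S.submatrix (Sigma.mk k) (Sigma.mk l) * (M l)ᵀ := by
  have htranspose : (blockDiagonal' M * S * (blockDiagonal' M)ᵀ).submatrix id (Sigma.mk l) =
      (blockDiagonal' M * S).submatrix id (Sigma.mk l) * (M l)ᵀ := by
    rw [← transpose_inj, transpose_submatrix, transpose_mul, transpose_transpose,
      submatrix_blockDiagonal'_mul, transpose_mul, transpose_mul, transpose_transpose,
      transpose_submatrix, transpose_mul]
  calc _ = ((blockDiagonal' M * S * (blockDiagonal' M)ᵀ).submatrix id (Sigma.mk l)).submatrix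
        (Sigma.mk k) id := rfl
    _ = ((blockDiagonal' M * S).submatrix (Sigma.mk k) id).submatrix id (Sigma.mk l) *
        (M l)ᵀ := by rw [htranspose]; rfl
    _ = _ := by rw [submatrix_blockDiagonal'_mul]; rfl

theorem dotProduct_blockDiagonal'_mulVec {R : Type*} [NonUnitalNonAssocSemiring R]
    (M : ∀ l, Matrix (ι l) (ι l) R) (x y : (Σ l, ι l) → R) :
    x ⬝ᵥ (blockDiagonal' M *ᵥ y) =
      ∑ l, (fun i ↦ x ⟨l, i⟩) ⬝ᵥ (M l *ᵥ fun i ↦ y ⟨l, i⟩) := by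
  simp only [dotProduct, Fintype.sum_sigma, blockDiagonal'_mulVec_apply]

end BlockDiagonal

open scoped ComplexOrder in
theorem posDef_blockDiagonal' {o : Type*} {ι : o → Type*} [Finite o] [DecidableEq o]
    [∀ l, Finite (ι l)] {𝕜 : Type*} [RCLike 𝕜] {M : ∀ l, Matrix (ι l) (ι l) 𝕜}
    (hM : ∀ l, (M l).PosDef) : (blockDiagonal' M).PosDef := by
  have := Fintype.ofFinite o
  have (l : o) := Fintype.ofFinite (ι l)
  refine .of_dotProduct_mulVec_pos
    (isHermitian_blockDiagonal'_iff.2 fun l ↦ (hM l).isHermitian) fun x hx ↦ ?_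
  rw [dotProduct_blockDiagonal'_mulVec]
  obtain ⟨⟨l, i⟩, hi⟩ := Function.ne_iff.1 hx
  exact Finset.sum_pos' (fun k _ ↦ (hM k).posSemidef.dotProduct_mulVec_nonneg _)
    ⟨l, Finset.mem_univ l, (hM l).dotProduct_mulVec_pos (Function.ne_iff.2 ⟨i, hi⟩)⟩

section GaussPDF

variable {ι κ : Type*} [Fintype ι] [DecidableEq ι] [Fintype κ] [DecidableEq κ]

theorem gaussPDF_eq_of_sub_eq_sub {μ ν x y : ι → ℝ} (h : x - μ = y - ν) (S : Matrix ι ι ℝ) :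
    gaussPDF μ S x = gaussPDF ν S y := by
  rw [gaussPDF, gaussPDF, h]

theorem gaussPDF_comp_equiv (e : ι ≃ κ) (μ : κ → ℝ) (S : Matrix κ κ ℝ) (x : κ → ℝ) :
    gaussPDF (μ ∘ e) (S.submatrix e e) (x ∘ e) = gaussPDF μ S x := by
  have hsub : x ∘ e - μ ∘ e = (x - μ) ∘ e := rfl
  rw [gaussPDF, gaussPDF, hsub, Fintype.card_congr e, det_submatrix_equiv_self,
    inv_submatrix_equiv, submatrix_mulVec_equiv, Function.comp_assoc, e.self_comp_symm,
    Function.comp_id, comp_equiv_dotProduct_comp_equiv]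

theorem gaussPDF_mulVec {M S : Matrix ι ι ℝ} (hM : IsUnit M.det) (hS : S.PosSemidef)
    (μ x : ι → ℝ) :
    gaussPDF (M *ᵥ μ) (M * S * Mᵀ) (M *ᵥ x) = |M.det|⁻¹ * gaussPDF μ S x := by
  have hdet : (M * S * Mᵀ).det ^ (-(1 : ℝ) / 2) = |M.det|⁻¹ * S.det ^ (-(1 : ℝ) / 2) := by
    have habs : (M * S * Mᵀ).det = |M.det| ^ (2 : ℝ) * S.det := by
      rw [det_mul, det_mul, det_transpose, Real.rpow_two, sq_abs]
      ring
    rw [habs, Real.mul_rpow (by positivity) hS.det_nonneg, ← Real.rpow_mul (abs_nonneg _)]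
    norm_num [Real.rpow_neg_one]
  have hquad : (M *ᵥ x - M *ᵥ μ) ⬝ᵥ ((M * S * Mᵀ)⁻¹ *ᵥ (M *ᵥ x - M *ᵥ μ)) =
      (x - μ) ⬝ᵥ (S⁻¹ *ᵥ (x - μ)) := by
    rw [← mulVec_sub, Matrix.mul_inv_rev, Matrix.mul_inv_rev, mulVec_mulVec, Matrix.mul_assoc,
      Matrix.mul_assoc, nonsing_inv_mul _ hM, Matrix.mul_one, ← mulVec_mulVec,
      ← transpose_nonsing_inv, dotProduct_mulVec, vecMul_transpose, mulVec_mulVec,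
      nonsing_inv_mul _ hM, one_mulVec]
  rw [gaussPDF, gaussPDF, hdet, hquad]
  ring

theorem gaussPDF_fromBlocks_diagonal {A : Matrix ι ι ℝ} {D : Matrix κ κ ℝ} (hA : A.PosDef)
    (hD : D.PosDef) (μ x : ι → ℝ) (ν y : κ → ℝ) :
    gaussPDF (Sum.elim μ ν) (fromBlocks A 0 0 D) (Sum.elim x y) =
      gaussPDF μ A x * gaussPDF ν D y := by
  have hcard : (2 * π) ^ (-(Fintype.card (ι ⊕ κ) : ℝ) / 2) =
      (2 * π) ^ (-(Fintype.card ι : ℝ) / 2) * (2 * π) ^ (-(Fintype.card κ : ℝ) / 2) := by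
    rw [← Real.rpow_add (by positivity), Fintype.card_sum]
    push_cast
    ring_nf
  have hsub : Sum.elim x y - Sum.elim μ ν = Sum.elim (x - μ) (y - ν) := by
    ext (i | i) <;> rfl
  have hinv : (fromBlocks A 0 0 D)⁻¹ = fromBlocks A⁻¹ 0 0 D⁻¹ := by
    rw [inv_fromBlocks_zero₂₁_of_isUnit_iff _ _ _ (iff_of_true hA.isUnit hD.isUnit)]
    simp
  have hquad : Sum.elim (x - μ) (y - ν) ⬝ᵥ (fromBlocks A⁻¹ 0 0 D⁻¹ *ᵥ Sum.elim (x - μ) (y - ν)) =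
      (x - μ) ⬝ᵥ (A⁻¹ *ᵥ (x - μ)) + (y - ν) ⬝ᵥ (D⁻¹ *ᵥ (y - ν)) := by
    simp [fromBlocks_mulVec, sumElim_dotProduct_sumElim]
  rw [gaussPDF, gaussPDF, gaussPDF, hcard, hsub, hinv, hquad, det_fromBlocks_zero₂₁,
    Real.mul_rpow hA.det_pos.le hD.det_pos.le, mul_add, Real.exp_add]
  ring

theorem gaussPDF_mul_gaussPDF_add_mulVec {A : Matrix ι ι ℝ} {D : Matrix κ κ ℝ} (hA : A.PosDef)
    (hD : D.PosDef) (G : Matrix κ ι ℝ) (μ x : ι → ℝ) (ν y : κ → ℝ) :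
    gaussPDF μ A x * gaussPDF (ν + G *ᵥ (x - μ)) D y =
      gaussPDF (Sum.elim μ ν) (fromBlocks A (A * Gᵀ) (G * A) (D + G * A * Gᵀ))
        (Sum.elim x y) := by
  set Λ : Matrix (ι ⊕ κ) (ι ⊕ κ) ℝ := fromBlocks 1 0 G 1 with hΛ
  set u : ι ⊕ κ → ℝ := Sum.elim (x - μ) (y - (ν + G *ᵥ (x - μ))) with hu
  have hdet : Λ.det = 1 := by simp [hΛ]
  have hcov : Λ * fromBlocks A 0 0 D * Λᵀ =
      fromBlocks A (A * Gᵀ) (G * A) (D + G * A * Gᵀ) := by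
    simp [hΛ, fromBlocks_multiply, fromBlocks_transpose, add_comm]
  have hres : Λ *ᵥ u = Sum.elim x y - Sum.elim μ ν := by
    rw [hΛ, fromBlocks_mulVec]
    ext (i | i)
    · simp [hu]
    · simp only [hu, Sum.elim_comp_inl, one_mulVec, Sum.elim_comp_inr, Sum.elim_inr, Pi.add_apply,
        Pi.sub_apply]
      ring
  calc gaussPDF μ A x * gaussPDF (ν + G *ᵥ (x - μ)) D y
      = gaussPDF 0 A (x - μ) * gaussPDF 0 D (y - (ν + G *ᵥ (x - μ))) := by
        congr 1 <;> exact gaussPDF_eq_of_sub_eq_sub (sub_zero _).symm _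
    _ = gaussPDF 0 (fromBlocks A 0 0 D) u := by
        rw [← gaussPDF_fromBlocks_diagonal hA hD, Sum.elim_zero_zero]
    _ = gaussPDF (Λ *ᵥ 0) (Λ * fromBlocks A 0 0 D * Λᵀ) (Λ *ᵥ u) := by
        have hpsd : (fromBlocks A 0 0 D).PosSemidef := by
          simpa using (posDef_fromBlocks_add_mul_mul_conjTranspose hA hD 0).posSemidef
        rw [gaussPDF_mulVec (hdet ▸ isUnit_one) hpsd, hdet, abs_one, inv_one, one_mul]
    _ = _ := by
        rw [hcov]
        exact gaussPDF_eq_of_sub_eq_sub (by rw [mulVec_zero, sub_zero, hres]) _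

theorem gaussPDF_fromBlocks {A : Matrix ι ι ℝ} {B : Matrix ι κ ℝ} {C : Matrix κ ι ℝ}
    {D : Matrix κ κ ℝ} (h : (fromBlocks A B C D).PosDef) (μ x : ι → ℝ) (ν y : κ → ℝ) :
    gaussPDF (Sum.elim μ ν) (fromBlocks A B C D) (Sum.elim x y) =
      gaussPDF μ A x * gaussPDF (ν + C *ᵥ (A⁻¹ *ᵥ (x - μ))) (D - C * A⁻¹ * B) y := by
  have hA : A.PosDef := h.submatrix Sum.inl_injective
  have hschur := posDef_schurComplement h
  obtain ⟨-, rfl, -⟩ := isHermitian_fromBlocks_iff.1 h.isHermitian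
  have := hA.isUnit.invertible
  have hG : A * (Bᴴ * A⁻¹)ᵀ = B := by
    rw [← conjTranspose_eq_transpose_of_trivial, conjTranspose_mul, hA.inv.isHermitian.eq,
      conjTranspose_conjTranspose, mul_nonsing_inv_cancel_left _ _ hA.det_pos.ne'.isUnit]
  rw [mulVec_mulVec, gaussPDF_mul_gaussPDF_add_mulVec hA hschur, Matrix.mul_assoc _ A, hG]
  simp

theorem gaussPDF_sumElim_swap (A : Matrix ι ι ℝ) (B : Matrix ι κ ℝ) (C : Matrix κ ι ℝ)
    (D : Matrix κ κ ℝ) (μ x : ι → ℝ) (ν y : κ → ℝ) :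
    gaussPDF (Sum.elim ν μ) (fromBlocks D C B A) (Sum.elim y x) =
      gaussPDF (Sum.elim μ ν) (fromBlocks A B C D) (Sum.elim x y) := by
  rw [← gaussPDF_comp_equiv (Equiv.sumComm κ ι)]
  simp [Sum.elim_swap]

end GaussPDF

section Integral

variable {ι κ : Type*} [Fintype ι] [DecidableEq ι] [Fintype κ] [DecidableEq κ]

theorem integral_comp_mulVec {E : Type*} [NormedAddCommGroup E] [NormedSpace ℝ E]
    {M : Matrix ι ι ℝ} (hM : IsUnit M.det) (g : (ι → ℝ) → E) :
    ∫ x, g (M *ᵥ x) = |M.det|⁻¹ • ∫ x, g x := by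
  have hemb : MeasurableEmbedding (toLin' M) :=
    (toLin' M).continuous_of_finiteDimensional.measurableEmbedding
      (mulVec_injective_of_isUnit ((isUnit_iff_isUnit_det M).2 hM))
  have hmap := hemb.integral_map (μ := volume) g
  rw [Real.map_matrix_volume_pi_eq_smul_volume_pi hM.ne_zero, integral_smul_measure,
    ENNReal.toReal_ofReal (abs_nonneg _), abs_inv] at hmap
  exact hmap.symm

theorem gaussPDF_zero_one (x : ι → ℝ) :
    gaussPDF 0 1 x = ∏ i, ProbabilityTheory.gaussianPDFReal 0 1 (x i) := by
  simp only [gaussPDF, ProbabilityTheory.gaussianPDFReal, Finset.prod_mul_distrib, ← Real.exp_sum,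
    Finset.prod_const, Finset.card_univ]
  congr 1
  · rw [det_one, Real.one_rpow, mul_one, NNReal.coe_one, mul_one, Real.sqrt_eq_rpow,
      ← Real.rpow_neg (by positivity), ← Real.rpow_mul_natCast (by positivity)]
    ring_nf
  · simp [dotProduct, Finset.mul_sum, pow_two, div_eq_inv_mul]

theorem integral_gaussPDF (μ : ι → ℝ) {S : Matrix ι ι ℝ} (hS : S.PosDef) :
    ∫ x, gaussPDF μ S x = 1 := by
  obtain ⟨M, hM, rfl⟩ := exists_mul_conjTranspose_eq_of_posDef hS
  have hstd : ∫ x : ι → ℝ, gaussPDF 0 1 x = 1 := by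
    simp_rw [gaussPDF_zero_one]
    rw [integral_fintype_prod_volume_eq_pow (ProbabilityTheory.gaussianPDFReal 0 1),
      ProbabilityTheory.integral_gaussianPDFReal_eq_one 0 one_ne_zero, one_pow]
  have hscale (x : ι → ℝ) :
      gaussPDF 0 (M * Mᴴ) (M *ᵥ x) = |M.det|⁻¹ * gaussPDF 0 1 x := by
    simpa using gaussPDF_mulVec hM PosSemidef.one 0 x
  have habs : |M.det|⁻¹ ≠ 0 := inv_ne_zero (abs_ne_zero.2 hM.ne_zero)
  calc ∫ x, gaussPDF μ (M * Mᴴ) x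
      = ∫ x, gaussPDF 0 (M * Mᴴ) (x - μ) := by
        exact integral_congr_ae (.of_forall fun x ↦ gaussPDF_eq_of_sub_eq_sub (by simp) _)
    _ = ∫ x, gaussPDF 0 (M * Mᴴ) x := integral_sub_right_eq_self _ μ
    _ = 1 := by
        have hint := integral_comp_mulVec hM (gaussPDF 0 (M * Mᴴ))
        simp_rw [hscale] at hint
        rw [integral_const_mul, hstd, smul_eq_mul] at hint
        exact (mul_left_cancel₀ habs hint).symm

theorem integral_gaussPDF_fromBlocks {A : Matrix ι ι ℝ} {B : Matrix ι κ ℝ} {C : Matrix κ ι ℝ}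
    {D : Matrix κ κ ℝ} (h : (fromBlocks A B C D).PosDef) (μ : ι → ℝ) (ν y : κ → ℝ) :
    ∫ x, gaussPDF (Sum.elim μ ν) (fromBlocks A B C D) (Sum.elim x y) = gaussPDF ν D y := by
  have hswap : (fromBlocks D C B A).PosDef := by
    simpa using h.submatrix (Equiv.sumComm κ ι).injective
  simp_rw [← gaussPDF_sumElim_swap A B C D, gaussPDF_fromBlocks hswap]
  rw [integral_const_mul, integral_gaussPDF _ (posDef_schurComplement hswap), mul_one]

theorem integral_gaussPDF_mul_gaussPDF_mulVec {S : Matrix ι ι ℝ} (hS : S.PosDef)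
    {B : Matrix κ κ ℝ} (hB : B.PosDef) (A : Matrix κ ι ℝ) (μ : ι → ℝ) (y : κ → ℝ) :
    ∫ x, gaussPDF μ S x * gaussPDF (A *ᵥ x) B y = gaussPDF (A *ᵥ μ) (B + A * S * Aᵀ) y := by
  have hjoint (x : ι → ℝ) : gaussPDF μ S x * gaussPDF (A *ᵥ x) B y =
      gaussPDF (Sum.elim μ (A *ᵥ μ)) (fromBlocks S (S * Aᵀ) (A * S) (B + A * S * Aᵀ))
        (Sum.elim x y) := by
    rw [← gaussPDF_mul_gaussPDF_add_mulVec hS hB, mulVec_sub, add_sub_cancel]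
  simp_rw [hjoint]
  exact integral_gaussPDF_fromBlocks (posDef_fromBlocks_add_mul_mul_conjTranspose hS hB A) _ _ _

end Integral

/-- The marginal on the coordinates in `s` of the Gaussian density with mean `μ` and covariance
`S`, evaluated at the subvector of `x`. It is given by the subvector of `μ` and the principal
submatrix of `S` rather than as an integral; varying `s` interpolates between `1` and the full
density. -/
def gaussMarginalPDF {ι : Type*} [Fintype ι] [DecidableEq ι] (μ : ι → ℝ) (S : Matrix ι ι ℝ)
    (x : ι → ℝ) (s : Set ι) : ℝ :=
  have := Fintype.ofFinite s
  gaussPDF (μ ∘ (↑) : s → ℝ) (S.submatrix (↑) (↑)) (x ∘ (↑))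

section Marginal

variable {ι κ : Type*} [Fintype ι] [DecidableEq ι] [Fintype κ] [DecidableEq κ]

theorem gaussMarginalPDF_range {e : κ → ι} (he : Function.Injective e) (μ : ι → ℝ)
    (S : Matrix ι ι ℝ) (x : ι → ℝ) :
    gaussMarginalPDF μ S x (Set.range e) = gaussPDF (μ ∘ e) (S.submatrix e e) (x ∘ e) := by
  let := Fintype.ofFinite (Set.range e)
  exact (gaussPDF_comp_equiv (Equiv.ofInjective e he) (μ ∘ (↑)) (S.submatrix (↑) (↑))
    (x ∘ (↑))).symm

theorem gaussMarginalPDF_univ (μ : ι → ℝ) (S : Matrix ι ι ℝ) (x : ι → ℝ) :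
    gaussMarginalPDF μ S x Set.univ = gaussPDF μ S x := by
  simpa using gaussMarginalPDF_range Function.injective_id μ S x

theorem gaussMarginalPDF_empty (μ : ι → ℝ) (S : Matrix ι ι ℝ) (x : ι → ℝ) :
    gaussMarginalPDF μ S x ∅ = 1 := by
  simp [gaussMarginalPDF, gaussPDF]

end Marginal

section Layers

variable {d : Fin L → ℕ}

/-- The inclusion of the indices of the layers up to and including `l`, split into those strictly
before `l` and those of layer `l`. -/
def belowSumLayer (d : Fin L → ℕ) (l : Fin L) :
    Below d l ⊕ Fin (d l) → (i : Fin L) × Fin (d i) :=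
  Sum.elim Subtype.val fun i ↦ ⟨l, i⟩

theorem belowSumLayer_injective (l : Fin L) : Function.Injective (belowSumLayer d l) := by
  refine Subtype.val_injective.sumElim (sigma_mk_injective (β := fun i ↦ Fin (d i))) ?_
  rintro ⟨p, hp⟩ i rfl
  exact hp.false

theorem range_belowSumLayer (l : Fin L) :
    Set.range (belowSumLayer d l) = {p | p.1.val < l.val + 1} := by
  ext ⟨k, i⟩
  refine ⟨?_, fun hk ↦ ?_⟩
  · rintro ⟨⟨p, hp⟩ | j, h⟩
    · obtain rfl : p = ⟨k, i⟩ := h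
      exact Nat.lt_succ_of_lt hp
    · obtain rfl : l = k := congrArg Sigma.fst h
      exact Nat.lt_succ_self _
  · obtain hlt | heq := Nat.lt_succ_iff_lt_or_eq.1 hk
    · exact ⟨.inl ⟨⟨k, i⟩, hlt⟩, rfl⟩
    · obtain rfl : k = l := Fin.ext heq
      exact ⟨.inr i, rfl⟩

variable {S : Matrix ((i : Fin L) × Fin (d i)) ((i : Fin L) × Fin (d i)) ℝ}

theorem submatrix_belowSumLayer
    (S : Matrix ((i : Fin L) × Fin (d i)) ((i : Fin L) × Fin (d i)) ℝ) (l : Fin L) :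
    S.submatrix (belowSumLayer d l) (belowSumLayer d l) =
      fromBlocks (prevBlock S l) (colBlock S l) (rowBlock S l) (diagBlock S l) := by
  ext (p | i) (q | j) <;> rfl

theorem comp_belowSumLayer (x : ((i : Fin L) × Fin (d i)) → ℝ) (l : Fin L) :
    x ∘ belowSumLayer d l = Sum.elim (belowVec x l) (blockVec x l) :=
  Sum.comp_elim _ _ _

theorem posDef_fromBlocks_prevBlock (hS : S.PosDef) (l : Fin L) :
    (fromBlocks (prevBlock S l) (colBlock S l) (rowBlock S l) (diagBlock S l)).PosDef :=
  submatrix_belowSumLayer S l ▸ hS.submatrix (belowSumLayer_injective l)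

theorem sigmaHat_posDef (hS : S.PosDef) (l : Fin L) : (sigmaHat S l).PosDef :=
  posDef_schurComplement (posDef_fromBlocks_prevBlock hS l)

theorem gaussMarginalPDF_layers_succ (hS : S.PosDef) (μ x : ((i : Fin L) × Fin (d i)) → ℝ)
    (l : Fin L) :
    gaussMarginalPDF μ S x {p | p.1.val < l.val + 1} =
      gaussMarginalPDF μ S x {p | p.1.val < l.val} *
        gaussPDF (muHat μ S x l) (sigmaHat S l) (blockVec x l) := by
  have hbelow : gaussMarginalPDF μ S x {p | p.1.val < l.val} =
      gaussPDF (belowVec μ l) (prevBlock S l) (belowVec x l) := by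
    have hrange : {p : (i : Fin L) × Fin (d i) | p.1.val < l.val} =
        Set.range (Subtype.val : Below d l → _) :=
      Subtype.range_val.symm
    rw [hrange, gaussMarginalPDF_range Subtype.val_injective]
    rfl
  rw [← range_belowSumLayer, gaussMarginalPDF_range (belowSumLayer_injective l),
    submatrix_belowSumLayer, comp_belowSumLayer, comp_belowSumLayer,
    gaussPDF_fromBlocks (posDef_fromBlocks_prevBlock hS l), hbelow, muHat, sigmaHat]

theorem gaussPDF_eq_prod_muHat_sigmaHat (hS : S.PosDef)
    (μ x : ((i : Fin L) × Fin (d i)) → ℝ) :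
    gaussPDF μ S x = ∏ l, gaussPDF (muHat μ S x l) (sigmaHat S l) (blockVec x l) := by
  have htelescope := Finset.prod_range_induction
    (fun k ↦ if h : k < L then
      gaussPDF (muHat μ S x ⟨k, h⟩) (sigmaHat S ⟨k, h⟩) (blockVec x ⟨k, h⟩) else 1)
    (fun k ↦ gaussMarginalPDF μ S x {p | p.1.val < k}) (by simp [gaussMarginalPDF_empty]) L
    fun k hk ↦ by simpa [hk] using gaussMarginalPDF_layers_succ hS μ x ⟨k, hk⟩
  rw [Finset.prod_fin_eq_prod_range, htelescope]
  simp [gaussMarginalPDF_univ]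

theorem gaussPDF_blockDiagonal' {B : ∀ l, Matrix (Fin (d l)) (Fin (d l)) ℝ}
    (hB : ∀ l, (B l).PosDef) (μ x : ((i : Fin L) × Fin (d i)) → ℝ) :
    gaussPDF μ (blockDiagonal' B) x = ∏ l, gaussPDF (blockVec μ l) (B l) (blockVec x l) := by
  have hrow (l : Fin L) : rowBlock (blockDiagonal' B) l = 0 := by
    ext i q
    exact blockDiagonal'_apply_ne B i q.val.2 q.2.ne'
  have hdiag (l : Fin L) : diagBlock (blockDiagonal' B) l = B l := by
    ext i j
    exact blockDiagonal'_apply_eq B l i j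
  rw [gaussPDF_eq_prod_muHat_sigmaHat (posDef_blockDiagonal' hB)]
  simp [muHat, sigmaHat, hrow, hdiag]

theorem integral_gaussPDF_mul_prod_gaussPDF {m : Fin L → ℕ}
    {S : Matrix ((i : Fin L) × Fin (m i)) ((i : Fin L) × Fin (m i)) ℝ} (hS : S.PosDef)
    {B : ∀ l, Matrix (Fin (d l)) (Fin (d l)) ℝ} (hB : ∀ l, (B l).PosDef)
    (A : ∀ l, Matrix (Fin (d l)) (Fin (m l)) ℝ) (μ : ((i : Fin L) × Fin (m i)) → ℝ)
    (y : ((i : Fin L) × Fin (d i)) → ℝ) :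
    ∫ x, gaussPDF μ S x * ∏ l, gaussPDF (A l *ᵥ blockVec x l) (B l) (blockVec y l) =
      gaussPDF (blockDiagonal' A *ᵥ μ)
        (blockDiagonal' B + blockDiagonal' A * S * (blockDiagonal' A)ᵀ) y := by
  have hblock (x : ((i : Fin L) × Fin (m i)) → ℝ) (l : Fin L) :
      blockVec (blockDiagonal' A *ᵥ x) l = A l *ᵥ blockVec x l :=
    funext (blockDiagonal'_mulVec_apply A x l)
  rw [← integral_gaussPDF_mul_gaussPDF_mulVec hS (posDef_blockDiagonal' hB)]
  simp_rw [gaussPDF_blockDiagonal' hB, hblock]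

end Layers

section DeepGP

variable (T : Fin (L + 1) → ℕ) (m : Fin L → ℕ)
  (A : ∀ l : Fin L, (Fin (T l.castSucc) → ℝ) → Matrix (Fin (T l.succ)) (Fin (m l)) ℝ)
  (B : ∀ l : Fin L, (Fin (T l.castSucc) → ℝ) → Matrix (Fin (T l.succ)) (Fin (T l.succ)) ℝ)
  (μM : ((i : Fin L) × Fin (m i)) → ℝ)
  {SM : Matrix ((i : Fin L) × Fin (m i)) ((i : Fin L) × Fin (m i)) ℝ}
  (f : ∀ l : Fin (L + 1), Fin (T l) → ℝ)

theorem muTilde_eq_blockDiagonal'_mulVec :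
    muTilde T m A μM f = blockDiagonal' (fun l ↦ A l (f l.castSucc)) *ᵥ μM :=
  funext fun p ↦
    (blockDiagonal'_mulVec_apply (fun l ↦ A l (f l.castSucc)) μM p.1 p.2).symm

theorem Stilde_eq_blockDiagonal'_add
    (SM : Matrix ((i : Fin L) × Fin (m i)) ((i : Fin L) × Fin (m i)) ℝ) :
    Stilde T m A B SM f = blockDiagonal' (fun l ↦ B l (f l.castSucc)) +
      blockDiagonal' (fun l ↦ A l (f l.castSucc)) * SM *
        (blockDiagonal' fun l ↦ A l (f l.castSucc))ᵀ := by
  ext ⟨k, i⟩ ⟨l, j⟩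
  rw [Stilde, of_apply, Matrix.add_apply]
  congr 1
  · obtain rfl | hkl := eq_or_ne k l
    · simp
    · simp [hkl, blockDiagonal'_apply_ne]
  · exact (congrFun₂ (submatrix_blockDiagonal'_mul_mul_transpose
      (fun l ↦ A l (f l.castSucc)) SM k l) i j).symm

theorem Stilde_posDef (hSM : SM.PosDef) (hB : ∀ l : Fin L, (B l (f l.castSucc)).PosDef) :
    (Stilde T m A B SM f).PosDef := by
  rw [Stilde_eq_blockDiagonal'_add, ← conjTranspose_eq_transpose_of_trivial]
  exact (posDef_blockDiagonal' hB).add_posSemidef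
    (hSM.posSemidef.mul_mul_conjTranspose_same _)

theorem deep_gp_marginalisation_general (hSM : SM.PosDef)
    (hB : ∀ l : Fin L, (B l (f l.castSucc)).PosDef) :
    (∀ l : Fin L, (sigmaHat (Stilde T m A B SM f) l).PosDef) ∧
      (∫ fM : ((i : Fin L) × Fin (m i)) → ℝ,
          gaussPDF μM SM fM *
            ∏ l : Fin L,
              gaussPDF (A l (f l.castSucc) *ᵥ fun a => fM ⟨l, a⟩) (B l (f l.castSucc))
                (f l.succ)) =
        ∏ l : Fin L,
          gaussPDF
            (muHat (muTilde T m A μM f) (Stilde T m A B SM f) (fun p => f p.1.succ p.2) l)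
            (sigmaHat (Stilde T m A B SM f) l) (f l.succ) := by
  have hS := Stilde_posDef T m A B f hSM hB
  refine ⟨sigmaHat_posDef hS, ?_⟩
  set y : ((l : Fin L) × Fin (T l.succ)) → ℝ := fun p ↦ f p.1.succ p.2
  have hmarginal := integral_gaussPDF_mul_prod_gaussPDF hSM hB (fun l ↦ A l (f l.castSucc)) μM y
  rw [← muTilde_eq_blockDiagonal'_mulVec, ← Stilde_eq_blockDiagonal'_add] at hmarginal
  exact hmarginal.trans (gaussPDF_eq_prod_muHat_sigmaHat hS _ y)

end DeepGP

/-- **Theorem 1 (deep-GP marginalisation).**  Under the deep-GP marginalisation setup,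
each `Σ̂^l` is symmetric positive definite and
`∫ N(f_M; μ_M, S_M) ∏_l N(f^l; A^l(f^{l−1}) f_M^l, B^l(f^{l−1})) df_M
  = ∏_l N(f^l; μ̂^l, Σ̂^l)`:
the inducing outputs can be marginalised analytically and the joint density of the layer
outputs factorises into a chain of Gaussian conditionals. -/
theorem deep_gp_marginalisation (L : ℕ) (hL : 1 ≤ L)
    (T : Fin (L + 1) → ℕ) (m : Fin L → ℕ)
    (μM : ((i : Fin L) × Fin (m i)) → ℝ)
    (SM : Matrix ((i : Fin L) × Fin (m i)) ((i : Fin L) × Fin (m i)) ℝ)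
    (hSM : SM.PosDef)
    (A : ∀ l : Fin L, (Fin (T l.castSucc) → ℝ) → Matrix (Fin (T l.succ)) (Fin (m l)) ℝ)
    (B : ∀ l : Fin L, (Fin (T l.castSucc) → ℝ) → Matrix (Fin (T l.succ)) (Fin (T l.succ)) ℝ)
    (hAmeas : ∀ l i j, Measurable fun x => A l x i j)
    (hBmeas : ∀ l i j, Measurable fun x => B l x i j)
    (hBpd : ∀ l x, (B l x).PosDef)
    (hInv : ∀ (f : ∀ l : Fin (L + 1), Fin (T l) → ℝ) (l : Fin L),
      IsUnit (prevBlock (Stilde T m A B SM f) l).det) :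
    ∀ f : ∀ l : Fin (L + 1), Fin (T l) → ℝ,
      (∀ l : Fin L, (sigmaHat (Stilde T m A B SM f) l).PosDef) ∧
      (∫ fM : ((i : Fin L) × Fin (m i)) → ℝ,
          gaussPDF μM SM fM *
            ∏ l : Fin L,
              gaussPDF (A l (f l.castSucc) *ᵥ fun a => fM ⟨l, a⟩) (B l (f l.castSucc))
                (f l.succ)) =
        ∏ l : Fin L,
          gaussPDF
            (muHat (muTilde T m A μM f) (Stilde T m A B SM f) (fun p => f p.1.succ p.2) l)
            (sigmaHat (Stilde T m A B SM f) l) (f l.succ) :=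
  fun f ↦ deep_gp_marginalisation_general T m A B μM f hSM fun l ↦ hBpd l _

end
end

section
/- Sparsity preservation of the Cholesky factor for stripes-and-arrow covariance matrices: fix L ≥ 2, τ ≥ 1, M ≥ 1, and let I := {(l, t) : 1 ≤ l ≤ L−1, 1 ≤ t ≤ τ} ∪ {(L, 1)} be ordered lexicographically (all pairs of layer l before layer l+1, and (L, 1) last). Let S be a symmetric positive definite matrix of size M·|I| composed of M×M blocks S_{(l,t),(l',t')} indexed by I × I, and assume the stripes-and-arrow pattern: S_{(l,t),(l',t')} = 0 whenever t ≠ t', l ≠ L and l' ≠ L. Then any lower triangular matrix R with positive diagonal entries satisfying R Rᵀ = S has the same sparsity pattern: R_{(l,t),(l',t')} = 0 whenever (l, t) > (l', t') fails in the block ordering, and also whenever l < L and t ≠ t'. -/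
open Matrix

/-- Position of a block index in the lexicographic ordering of
`I = {(l, t) : 1 ≤ l ≤ L−1, 1 ≤ t ≤ τ} ∪ {(L, 1)}`: all pairs of the latent layers
(ordered lexicographically) come first, and `(L, 1)` (encoded `Sum.inr ()`) comes last. -/
def blockOrd (L τ : ℕ) : (Fin (L - 1) × Fin τ) ⊕ Unit → ℕ := fun x =>
  match x with
  | Sum.inl a => a.1.val * τ + a.2.val
  | Sum.inr _ => (L - 1) * τ

/-!
Gaussian elimination of an index `k` can create a new nonzero entry at `(i, j)` only if `(i, k)`
and `(k, j)` are already in the pattern and `k` precedes both `i` and `j`. For stripes and an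
arrow whose tip comes last there is no such fill-in: if `i` and `j` are latent, then so is the
earlier index `k`, and it lies on the stripe of `i` and on that of `j`, so these coincide.

That a triangular factorization inherits a pattern without fill-in is seen by induction on the
column of `P` (and, symmetrically, the row of `Q`): if `(i, j)` is outside the pattern and `j`
precedes `i`, every term `P i k * Q k j` of `(P * Q) i j = 0` with `k ≠ j` vanishes, by
triangularity for `k` after `j` and by induction for `k` before `j`. What is left is
`P i j * Q j j = 0`.
-/

section Elimination

variable {n α K : Type*}

/-- The matrix `A` has sparsity pattern `r`: its nonzero entries lie at positions related
by `r`. -/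
def HasPattern [Zero K] (r : n → n → Prop) (A : Matrix n n K) : Prop :=
  ∀ ⦃i j⦄, ¬ r i j → A i j = 0

/-- Eliminating the indices in the order given by `ord` causes no fill-in of the pattern `r`.
For symmetric `r` these are the perfect elimination orderings of graph theory. -/
def IsPerfectElimination [LT α] (ord : n → α) (r : n → n → Prop) : Prop :=
  ∀ ⦃i j k⦄, ord k < ord i → ord k < ord j → r i k → r k j → r i j

variable [Fintype n] [LinearOrder α] [NonUnitalNonAssocSemiring K]
  {ord : n → α} {r : n → n → Prop}

theorem mul_apply_eq_mul_of_lt_of_gt (hord : ord.Injective) {P Q : Matrix n n K} {i j p : n}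
    (before : ∀ k, ord k < ord p → P i k = 0 ∨ Q k j = 0)
    (after : ∀ k, ord p < ord k → P i k = 0 ∨ Q k j = 0) :
    (P * Q) i j = P i p * Q p j := by
  rw [mul_apply]
  refine Fintype.sum_eq_single p fun k hk ↦ ?_
  exact mul_eq_zero_of_ne_zero_imp_eq_zero fun h ↦
    ((hord.ne hk).lt_or_gt.elim (before k) (after k)).resolve_left h

variable [NoZeroDivisors K]

namespace IsPerfectElimination

theorem hasPattern_of_mul (hr : IsPerfectElimination ord r) (hord : ord.Injective)
    {P Q : Matrix n n K} (hP : P.BlockTriangular (OrderDual.toDual ∘ ord))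
    (hQ : Q.BlockTriangular ord) (hPdiag : ∀ i, P i i ≠ 0) (hQdiag : ∀ i, Q i i ≠ 0)
    (hPQ : HasPattern r (P * Q)) : HasPattern r P ∧ HasPattern r Q := by
  suffices pivot : ∀ p i, (¬ r i p → P i p = 0) ∧ (¬ r p i → Q p i = 0) from
    ⟨fun i p ↦ (pivot p i).1, fun p i ↦ (pivot p i).2⟩
  intro p
  induction p using
    (Finite.wellFounded_of_trans_of_irrefl (InvImage (· < ·) ord)).induction with
  | _ p ih =>
  have before {i j k : n} (hki : ord k < ord i) (hkj : ord k < ord j) (hkp : ord k < ord p)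
      (hij : ¬ r i j) : P i k = 0 ∨ Q k j = 0 := by
    by_cases hik : r i k
    · exact .inr ((ih k hkp j).2 fun hkj' ↦ hij (hr hki hkj hik hkj'))
    · exact .inl ((ih k hkp i).1 hik)
  intro i
  rcases lt_or_ge (ord i) (ord p) with hip | hpi
  · exact ⟨fun _ ↦ hP hip, fun _ ↦ hQ hip⟩
  constructor
  · intro hr_ip
    have product_eq : (P * Q) i p = P i p * Q p p := mul_apply_eq_mul_of_lt_of_gt hord
      (fun k hk ↦ before (hk.trans_le hpi) hk hk hr_ip) (fun k hk ↦ .inr (hQ hk))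
    exact (mul_eq_zero.mp (product_eq ▸ hPQ hr_ip)).resolve_right (hQdiag p)
  · intro hr_pi
    have product_eq : (P * Q) p i = P p p * Q p i := mul_apply_eq_mul_of_lt_of_gt hord
      (fun k hk ↦ before hk (hk.trans_le hpi) hk hr_pi) (fun k hk ↦ .inl (hP hk))
    exact (mul_eq_zero.mp (product_eq ▸ hPQ hr_pi)).resolve_left (hPdiag p)

theorem hasPattern_of_mul_transpose (hr : IsPerfectElimination ord r) (hord : ord.Injective)
    {R : Matrix n n K} (hR : R.BlockTriangular (OrderDual.toDual ∘ ord))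
    (hdiag : ∀ i, R i i ≠ 0) (hRR : HasPattern r (R * Rᵀ)) : HasPattern r R :=
  (hr.hasPattern_of_mul hord hR hR.transpose hdiag hdiag hRR).1

end IsPerfectElimination

end Elimination

section StripesAndArrow

variable {Λ T O : Type*}

/-- The stripes-and-arrow pattern on block indices: two latent blocks (`Sum.inl`) are related when
they have the same time `t`, and the remaining blocks (`Sum.inr`, the arrow) are related to
everything. -/
def StripesAndArrow : (Λ × T) ⊕ O → (Λ × T) ⊕ O → Prop
  | .inl a, .inl b => a.2 = b.2
  | _, _ => True

theorem isPerfectElimination_stripesAndArrow {n α : Type*} [LT α] {ord : n → α}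
    {block : n → (Λ × T) ⊕ O}
    (arrow_last : ∀ ⦃i k⦄, ord k < ord i → (block i).isLeft → (block k).isLeft) :
    IsPerfectElimination ord fun i j ↦ StripesAndArrow (block i) (block j) := by
  intro i j k hki _ hik hkj
  rcases hi : block i with a | _
  · rcases hj : block j with b | _
    · obtain ⟨c, hk⟩ := Sum.isLeft_iff.mp (arrow_last hki (by simp only [hi, Sum.isLeft_inl]))
      have same_stripe_ik : a.2 = c.2 := by simpa only [hi, hk, StripesAndArrow] using hik
      have same_stripe_kj : c.2 = b.2 := by simpa only [hk, hj, StripesAndArrow] using hkj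
      exact same_stripe_ik.trans same_stripe_kj
    · trivial
  · trivial

theorem hasPattern_stripesAndArrow_iff {ι K : Type*} [Zero K]
    {A : Matrix (((Λ × T) ⊕ O) × ι) (((Λ × T) ⊕ O) × ι) K} :
    HasPattern (fun x y ↦ StripesAndArrow x.1 y.1) A ↔
      ∀ a b : Λ × T, a.2 ≠ b.2 → ∀ i j, A (.inl a, i) (.inl b, j) = 0 := by
  refine ⟨fun h a b hab i j ↦ h hab, fun h ↦ ?_⟩
  rintro ⟨a | _, i⟩ ⟨b | _, j⟩ hab
  · exact h a b hab i j
  all_goals exact absurd trivial hab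

end StripesAndArrow

section Ordering

theorem mul_add_lt_mul_add_of_lt {m q r i j : ℕ} (hi : i < m) (hqr : q < r) :
    q * m + i < r * m + j :=
  calc
    q * m + i < (q + 1) * m := by rw [add_one_mul]; gcongr
    _ ≤ r * m := Nat.mul_le_mul_right m hqr
    _ ≤ r * m + j := Nat.le_add_right _ _

theorem mul_add_val_injective (m : ℕ) :
    Function.Injective fun x : ℕ × Fin m ↦ x.1 * m + x.2 := by
  rintro ⟨q, i⟩ ⟨r, j⟩ h
  rcases lt_trichotomy q r with hqr | rfl | hqr
  · exact absurd h (mul_add_lt_mul_add_of_lt i.isLt hqr).ne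
  · simpa [Fin.ext_iff] using h
  · exact absurd h (mul_add_lt_mul_add_of_lt j.isLt hqr).ne'

variable {L τ M : ℕ}

theorem blockOrd_inl_lt_inr (a : Fin (L - 1) × Fin τ) (u : Unit) :
    blockOrd L τ (.inl a) < blockOrd L τ (.inr u) :=
  mul_add_lt_mul_add_of_lt (j := 0) a.2.isLt a.1.isLt

theorem blockOrd_injective : (blockOrd L τ).Injective := by
  rintro (a | u) (b | v) h
  · have := mul_add_val_injective τ (a₁ := (a.1, a.2)) (a₂ := (b.1, b.2)) h
    simp_all [Prod.ext_iff, Fin.ext_iff]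
  · exact absurd h (blockOrd_inl_lt_inr a v).ne
  · exact absurd h (blockOrd_inl_lt_inr b u).ne'
  · rfl

/-- Position of a scalar row or column in the lexicographic ordering of pairs consisting of a block
index and an offset in that block; both count from `0`. -/
def scalarOrd (L τ M : ℕ) (x : ((Fin (L - 1) × Fin τ) ⊕ Unit) × Fin M) : ℕ :=
  blockOrd L τ x.1 * M + x.2.val

theorem scalarOrd_injective : (scalarOrd L τ M).Injective :=
  (mul_add_val_injective M).comp (blockOrd_injective.prodMap Function.injective_id)

theorem scalarOrd_lt_of_blockOrd_lt {x y : ((Fin (L - 1) × Fin τ) ⊕ Unit) × Fin M}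
    (h : blockOrd L τ x.1 < blockOrd L τ y.1) : scalarOrd L τ M x < scalarOrd L τ M y :=
  mul_add_lt_mul_add_of_lt x.2.isLt h

theorem isLeft_of_scalarOrd_lt {x y : ((Fin (L - 1) × Fin τ) ⊕ Unit) × Fin M}
    (h : scalarOrd L τ M y < scalarOrd L τ M x) (hx : x.1.isLeft) : y.1.isLeft := by
  obtain ⟨a, ha⟩ := Sum.isLeft_iff.mp hx
  rcases hy : y.1 with b | u
  · rfl
  · have : blockOrd L τ x.1 < blockOrd L τ y.1 := by
      rw [ha, hy]
      exact blockOrd_inl_lt_inr a u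
    exact absurd h (scalarOrd_lt_of_blockOrd_lt this).asymm

end Ordering

theorem stripes_and_arrow_cholesky_sparsity_general {K : Type*} [NonUnitalNonAssocSemiring K]
    [NoZeroDivisors K] (L τ M : ℕ)
    (S : Matrix (((Fin (L - 1) × Fin τ) ⊕ Unit) × Fin M)
      (((Fin (L - 1) × Fin τ) ⊕ Unit) × Fin M) K)
    (hPattern : ∀ a b : Fin (L - 1) × Fin τ, a.2 ≠ b.2 →
      ∀ i j : Fin M, S (Sum.inl a, i) (Sum.inl b, j) = 0)
    (R : Matrix (((Fin (L - 1) × Fin τ) ⊕ Unit) × Fin M)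
      (((Fin (L - 1) × Fin τ) ⊕ Unit) × Fin M) K)
    (hRtri : ∀ x y : ((Fin (L - 1) × Fin τ) ⊕ Unit) × Fin M,
      blockOrd L τ x.1 * M + x.2.val < blockOrd L τ y.1 * M + y.2.val → R x y = 0)
    (hRdiag : ∀ x : ((Fin (L - 1) × Fin τ) ⊕ Unit) × Fin M, R x x ≠ 0)
    (hRchol : R * Rᵀ = S) :
    (∀ x y : ((Fin (L - 1) × Fin τ) ⊕ Unit) × Fin M,
      blockOrd L τ x.1 < blockOrd L τ y.1 → R x y = 0) ∧
      ∀ a b : Fin (L - 1) × Fin τ, a.2 ≠ b.2 →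
        ∀ i j : Fin M, R (Sum.inl a, i) (Sum.inl b, j) = 0 := by
  subst hRchol
  have no_fill_in : IsPerfectElimination (scalarOrd L τ M) fun x y ↦ StripesAndArrow x.1 y.1 :=
    isPerfectElimination_stripesAndArrow fun _ _ ↦ isLeft_of_scalarOrd_lt
  have lower_triangular : R.BlockTriangular (OrderDual.toDual ∘ scalarOrd L τ M) := hRtri
  exact ⟨fun x y h ↦ hRtri x y (scalarOrd_lt_of_blockOrd_lt h),
    hasPattern_stripesAndArrow_iff.mp <| no_fill_in.hasPattern_of_mul_transpose
      scalarOrd_injective lower_triangular hRdiag (hasPattern_stripesAndArrow_iff.mpr hPattern)⟩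

/-- **Sparsity preservation of the Cholesky factor for stripes-and-arrow covariance
matrices.**  If `S` is symmetric positive definite with the stripes-and-arrow pattern
(`S_{(l,t),(l',t')} = 0` whenever `t ≠ t'`, `l ≠ L`, `l' ≠ L`), then any lower triangular
`R` with positive diagonal entries satisfying `R Rᵀ = S` has the same sparsity pattern:
its blocks strictly above the block diagonal vanish, and its latent-layer blocks with
`t ≠ t'` vanish. -/
theorem stripes_and_arrow_cholesky_sparsity (L τ M : ℕ) (hL : 2 ≤ L) (hτ : 1 ≤ τ)
    (hM : 1 ≤ M)
    (S : Matrix (((Fin (L - 1) × Fin τ) ⊕ Unit) × Fin M)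
      (((Fin (L - 1) × Fin τ) ⊕ Unit) × Fin M) ℝ)
    (hS : S.PosDef)
    (hPattern : ∀ a b : Fin (L - 1) × Fin τ, a.2 ≠ b.2 →
      ∀ i j : Fin M, S (Sum.inl a, i) (Sum.inl b, j) = 0)
    (R : Matrix (((Fin (L - 1) × Fin τ) ⊕ Unit) × Fin M)
      (((Fin (L - 1) × Fin τ) ⊕ Unit) × Fin M) ℝ)
    (hRtri : ∀ x y : ((Fin (L - 1) × Fin τ) ⊕ Unit) × Fin M,
      blockOrd L τ x.1 * M + x.2.val < blockOrd L τ y.1 * M + y.2.val → R x y = 0)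
    (hRdiag : ∀ x : ((Fin (L - 1) × Fin τ) ⊕ Unit) × Fin M, 0 < R x x)
    (hRchol : R * Rᵀ = S) :
    (∀ x y : ((Fin (L - 1) × Fin τ) ⊕ Unit) × Fin M,
      blockOrd L τ x.1 < blockOrd L τ y.1 → R x y = 0) ∧
      ∀ a b : Fin (L - 1) × Fin τ, a.2 ≠ b.2 →
        ∀ i j : Fin M, R (Sum.inl a, i) (Sum.inl b, j) = 0 := by
  exact stripes_and_arrow_cholesky_sparsity_general L τ M S hPattern R hRtri
    (fun x ↦ (hRdiag x).ne') hRchol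
end
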